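/- Let b_1 be any real number with 1/2 ≤ b_1 < 1 and define the sequence (b_i)_{i ≥ 1} by b_{i+1} = F(F(b_i)). Then for every i ≥ 1 the iterate is well defined with 1/2 ≤ b_i < 1, and 1 − b_i ≤ (1 − b_1) / (ξ·(1+ξ/2) + 1)^{i−1}; in particular, b_i → 1 as i → ∞. -/

import Mathlib

open Filter

/-- The map `F(b) = (1+ξ)/(2+ξ−1/b)`. -/
noncomputable def F (ξ b : ℝ) : ℝ := (1 + ξ) / (2 + ξ - 1 / b)

theorem F_step (ξ : ℝ) (hξ : 0 < ξ) (x : ℝ) (h1 : 1 / 2 ≤ x) (h2 : x < 1) :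
    0 < 2 + ξ - 1 / x ∧ 0 < 2 + ξ - 1 / F ξ x ∧ 1 / 2 ≤ F ξ (F ξ x) ∧ F ξ (F ξ x) < 1 ∧
      1 - F ξ (F ξ x) ≤ (1 - x) / (ξ * (1 + ξ / 2) + 1) := by
  have hx : 0 < x := by linarith
  have hu : 1 / x ≤ 2 := by
    rw [div_le_iff₀ hx]; linarith
  have hu0 : 0 < 1 / x := by positivity
  have hd : 0 < 2 + ξ - 1 / x := by linarith
  have hc : 0 < 1 + ξ := by linarith
  have hF : 1 / F ξ x = (2 + ξ - 1 / x) / (1 + ξ) := by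
    unfold F; rw [one_div_div]
  have hd2 : 2 + ξ - 1 / F ξ x = (ξ * (2 + ξ) + 1 / x) / (1 + ξ) := by
    rw [hF]; field_simp; ring
  have hD : 0 < ξ * (2 + ξ) * x + 1 := by positivity
  have hFF : 1 - F ξ (F ξ x) = (1 - x) / (ξ * (2 + ξ) * x + 1) := by
    have : F ξ (F ξ x) = (1 + ξ) / (2 + ξ - 1 / F ξ x) := rfl
    rw [this, hd2]
    have h3 : ξ * (2 + ξ) + 1 / x = (ξ * (2 + ξ) * x + 1) / x := by field_simp
    rw [h3]
    field_simp
    ring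
  have hK : 0 < ξ * (2 + ξ) := by positivity
  have hle : 1 - F ξ (F ξ x) ≤ (1 - x) / (ξ * (1 + ξ / 2) + 1) := by
    rw [hFF]
    apply div_le_div_of_nonneg_left (by linarith) (by positivity)
    nlinarith
  have hpos : 0 < 1 - F ξ (F ξ x) := by
    rw [hFF]; exact div_pos (by linarith) hD
  have hle2 : (1 - x) / (ξ * (1 + ξ / 2) + 1) ≤ 1 - x := by
    apply div_le_self (by linarith)
    have : 0 < ξ * (1 + ξ / 2) := by positivity
    linarith
  refine ⟨hd, ?_, by linarith, by linarith, hle⟩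
  rw [hd2]; positivity

/-- If `1/2 ≤ b 1 < 1` and `b (i+1) = F (F (b i))` for `i ≥ 1`, then every iterate is
well defined (the denominators occurring in `F (b i)` and `F (F (b i))` are positive) with
`1/2 ≤ b i < 1`, one has `1 − b i ≤ (1 − b 1)/(ξ·(1+ξ/2)+1)^(i−1)`, and `b i → 1`. -/
theorem F_iterates_tendsto_one (ξ : ℝ) (hξ : 0 < ξ) (b : ℕ → ℝ)
    (hb1 : 1 / 2 ≤ b 1) (hb2 : b 1 < 1)
    (hrec : ∀ i, 1 ≤ i → b (i + 1) = F ξ (F ξ (b i))) :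
    (∀ i, 1 ≤ i →
      0 < 2 + ξ - 1 / b i ∧
      0 < 2 + ξ - 1 / F ξ (b i) ∧
      1 / 2 ≤ b i ∧ b i < 1 ∧
      1 - b i ≤ (1 - b 1) / (ξ * (1 + ξ / 2) + 1) ^ (i - 1)) ∧
    Tendsto b atTop (nhds 1) := by
  have key : ∀ n, 1 / 2 ≤ b (n + 1) ∧ b (n + 1) < 1 ∧
      1 - b (n + 1) ≤ (1 - b 1) / (ξ * (1 + ξ / 2) + 1) ^ n := by
    intro n
    induction n with
    | zero => exact ⟨hb1, hb2, by simp⟩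
    | succ n ih =>
      obtain ⟨h1, h2, h3⟩ := ih
      obtain ⟨-, -, h4, h5, h6⟩ := F_step ξ hξ _ h1 h2
      rw [← hrec (n + 1) (by omega)] at h4 h5 h6
      refine ⟨h4, h5, h6.trans ?_⟩
      rw [pow_succ, ← div_div]
      gcongr
  constructor
  · intro i hi
    obtain ⟨n, rfl⟩ : ∃ n, i = n + 1 := ⟨i - 1, by omega⟩
    obtain ⟨h1, h2, h3⟩ := key n
    obtain ⟨h4, h5, -⟩ := F_step ξ hξ _ h1 h2
    exact ⟨h4, h5, h1, h2, h3⟩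
  · rw [← tendsto_add_atTop_iff_nat 1]
    have hq : 1 < ξ * (1 + ξ / 2) + 1 := by
      have : 0 < ξ * (1 + ξ / 2) := by positivity
      linarith
    have hl : Tendsto (fun n : ℕ => (1 - b 1) / (ξ * (1 + ξ / 2) + 1) ^ n) atTop (nhds 0) :=
      (tendsto_pow_atTop_atTop_of_one_lt hq).const_div_atTop _
    have hl2 := hl.const_sub 1
    rw [sub_zero] at hl2
    refine tendsto_of_tendsto_of_tendsto_of_le_of_le hl2 tendsto_const_nhds ?_ ?_
    · intro n
      have := (key n).2.2
      simp only
      linarith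
    · intro n
      exact (key n).2.1.le
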